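/- arXiv:2210.03040 — 2 statements merged into one kernel-verified Lean document; each statement's English description precedes it below -/
import Mathlib

section
/- (Proposition 2, forward direction.) Let h, γ, η, π_v be real numbers with h > 0, 0 < γ ≤ 1, 0 ≤ η ≤ h − 1, and |γ·π_v| < h. Set the target scanline to the middle scanline s = h/2 and define the forward correlation factor c = γ·(s − η)·(h − γ·π_v)/h². Then: if η < h/2 then 0 < c < 1; if η = h/2 then c = 0; and if η > h/2 then −1 < c < 0. In particular c always lies in the open interval (−1, 1). -/
/-- Proposition 2, forward direction: the forward middle-scanline correlation factor
lies in (0,1), equals 0, or lies in (−1,0) according to η < h/2, η = h/2, η > h/2;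
in particular it always lies in (−1, 1). -/
theorem forward_correlation_factor_bounds
    (h γ η πv : ℝ) (hh : 0 < h) (hγ0 : 0 < γ) (hγ1 : γ ≤ 1)
    (hη0 : 0 ≤ η) (hη1 : η ≤ h - 1) (hπ : |γ * πv| < h) :
    (η < h / 2 →
      0 < γ * (h / 2 - η) * (h - γ * πv) / h ^ 2 ∧
      γ * (h / 2 - η) * (h - γ * πv) / h ^ 2 < 1) ∧
    (η = h / 2 → γ * (h / 2 - η) * (h - γ * πv) / h ^ 2 = 0) ∧
    (η > h / 2 →
      -1 < γ * (h / 2 - η) * (h - γ * πv) / h ^ 2 ∧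
      γ * (h / 2 - η) * (h - γ * πv) / h ^ 2 < 0) ∧
    (-1 < γ * (h / 2 - η) * (h - γ * πv) / h ^ 2 ∧
      γ * (h / 2 - η) * (h - γ * πv) / h ^ 2 < 1) := by
  obtain ⟨hlo, hhi⟩ := abs_lt.mp hπ
  have hD : 0 < h - γ * πv := by linarith
  have hsq : 0 < h ^ 2 := by positivity
  have hscan : |γ * (h / 2 - η)| ≤ h / 2 := by
    rw [abs_mul, abs_of_pos hγ0]
    have hdist : |h / 2 - η| ≤ h / 2 := abs_le.mpr ⟨by linarith, by linarith⟩
    exact (mul_le_of_le_one_left (abs_nonneg _) hγ1).trans hdist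
  have hbound : |γ * (h / 2 - η) * (h - γ * πv) / h ^ 2| < 1 := by
    rw [abs_div, abs_of_pos hsq, div_lt_one hsq, abs_mul, abs_of_pos hD]
    calc |γ * (h / 2 - η)| * (h - γ * πv) ≤ h / 2 * (h - γ * πv) := by gcongr
      _ < h / 2 * (2 * h) := by gcongr; linarith
      _ = h ^ 2 := by ring
  obtain ⟨hl, hu⟩ := abs_lt.mp hbound
  refine ⟨fun hη => ⟨?_, hu⟩, fun hη => by simp [hη], fun hη => ⟨hl, ?_⟩, hl, hu⟩
  · have hs : 0 < h / 2 - η := sub_pos.mpr hη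
    positivity
  · have hs : h / 2 - η < 0 := sub_neg.mpr hη
    exact div_neg_of_neg_of_pos
      (mul_neg_of_neg_of_pos (mul_neg_of_pos_of_neg hγ0 hs) hD) hsq
end

section
/- (Proposition 2, backward direction.) Let h, γ, η, π_v be real numbers with h > 0, −1 ≤ γ < 0, 0 ≤ η ≤ h − 1, and |γ·π_v| < h. Set the target scanline to the middle scanline s = h/2 and define the backward correlation factor c = γ·(s − η)·(h − γ·π_v)/h². Then: if η < h/2 then −1 < c < 0; if η = h/2 then c = 0; and if η > h/2 then 0 < c < 1. In particular c always lies in the open interval (−1, 1). -/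
/-- Proposition 2, backward direction: with γ ∈ [−1, 0), the backward middle-scanline
correlation factor lies in (−1,0), equals 0, or lies in (0,1) according to
η < h/2, η = h/2, η > h/2; in particular it always lies in (−1, 1). -/
theorem backward_correlation_factor_bounds
    (h γ η πv : ℝ) (hh : 0 < h) (hγ0 : -1 ≤ γ) (hγ1 : γ < 0)
    (hη0 : 0 ≤ η) (hη1 : η ≤ h - 1) (hπ : |γ * πv| < h) :
    (η < h / 2 →
      -1 < γ * (h / 2 - η) * (h - γ * πv) / h ^ 2 ∧
      γ * (h / 2 - η) * (h - γ * πv) / h ^ 2 < 0) ∧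
    (η = h / 2 → γ * (h / 2 - η) * (h - γ * πv) / h ^ 2 = 0) ∧
    (η > h / 2 →
      0 < γ * (h / 2 - η) * (h - γ * πv) / h ^ 2 ∧
      γ * (h / 2 - η) * (h - γ * πv) / h ^ 2 < 1) ∧
    (-1 < γ * (h / 2 - η) * (h - γ * πv) / h ^ 2 ∧
      γ * (h / 2 - η) * (h - γ * πv) / h ^ 2 < 1) := by
  obtain ⟨hlo, hhi⟩ := abs_lt.mp hπ
  have hpos : 0 < h - γ * πv := by linarith
  have hsq : 0 < h ^ 2 := by positivity
  have hdist : |γ * (h / 2 - η)| ≤ h / 2 := by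
    have hγ : |γ| ≤ 1 := abs_le.mpr ⟨hγ0, by linarith⟩
    have hη : |h / 2 - η| ≤ h / 2 := abs_le.mpr ⟨by linarith, by linarith⟩
    calc |γ * (h / 2 - η)| = |γ| * |h / 2 - η| := abs_mul _ _
      _ ≤ 1 * (h / 2) := by gcongr
      _ = h / 2 := one_mul _
  have hbound : -1 < γ * (h / 2 - η) * (h - γ * πv) / h ^ 2 ∧
      γ * (h / 2 - η) * (h - γ * πv) / h ^ 2 < 1 := by
    rw [← abs_lt, abs_div, abs_of_pos hsq, div_lt_one hsq, abs_mul, abs_of_pos hpos]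
    calc |γ * (h / 2 - η)| * (h - γ * πv) ≤ h / 2 * (h - γ * πv) := by gcongr
      _ < h / 2 * (2 * h) := by gcongr; linarith
      _ = h ^ 2 := by ring
  refine ⟨fun hlt => ⟨hbound.1, ?_⟩, fun heq => by simp [heq], fun hgt => ⟨?_, hbound.2⟩, hbound⟩
  · exact div_neg_of_neg_of_pos
      (mul_neg_of_neg_of_pos (mul_neg_of_neg_of_pos hγ1 (sub_pos.mpr hlt)) hpos) hsq
  · exact div_pos (mul_pos (mul_pos_of_neg_of_neg hγ1 (sub_neg.mpr hgt)) hpos) hsq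
end
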